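/- Let E, N be positive, α > 0, D > 0, K > 0, and let p : ℕ → ℝ be defined by p(c) = K/c for c ≥ 1. Then for every c ≥ 2 the right-hand side of the master equation evaluated at p, namely R(c) = (D/E)[(c+1)p(c+1) − c p(c)] + (2D/(2E+Nα))[(c−1+α)p(c−1) − (c+α)p(c)], satisfies: the edge-removal term vanishes exactly, (c+1)p(c+1) − c p(c) = 0, and R(c) = 2 D K α / ((2E + Nα) c (c−1)). In particular, for each fixed c ≥ 2, R(c) → 0 as α → 0⁺, so the power-law profile p(c) = K/c is a stationary solution of the master equation in the limit of vanishing attraction coefficient α. -/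

import Mathlib

/-!
For `p c = K / c` the product `c * p c` is constant. Edge removal and the part of the reattachment
term that does not involve `α` are differences of such products, hence vanish. What survives is
`α * (p (c - 1) - p c) = α * K / (c * (c - 1))`, so the right-hand side depends on `α` only through
the factor `α / (2 * E + N * α)`, which tends to `0` with `α`.
-/

open Filter Topology

section Algebra

variable {𝕜 : Type*} [Field 𝕜]

/-- The degree profile `p(c) ∝ 1/c` with constant `K`. The value at degree `0` is left free. -/
def IsInverseDegreeLaw (K : 𝕜) (p : ℕ → 𝕜) : Prop :=
  ∀ c : ℕ, 1 ≤ c → p c = K / (c : 𝕜)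

/-- The edge-removal bracket of the master equation, without its rate `D / E`. -/
def edgeRemovalTerm (p : ℕ → 𝕜) (c : ℕ) : 𝕜 :=
  ((c : 𝕜) + 1) * p (c + 1) - (c : 𝕜) * p c

/-- The preferential-reattachment bracket of the master equation, without its rate
`2D / (2E + Nα)`. At `c = 0` the truncated `c - 1` reads `p 0` in place of `p(-1)`. -/
def reattachmentTerm (α : 𝕜) (p : ℕ → 𝕜) (c : ℕ) : 𝕜 :=
  ((c : 𝕜) - 1 + α) * p (c - 1) - ((c : 𝕜) + α) * p c

/-- The right-hand side of the master equation at the profile `p`, for `E` edges, `N` nodes,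
relaxation rate `D` and attraction coefficient `α`. -/
def masterRHS (E N D α : 𝕜) (p : ℕ → 𝕜) (c : ℕ) : 𝕜 :=
  D / E * edgeRemovalTerm p c + 2 * D / (2 * E + N * α) * reattachmentTerm α p c

variable [CharZero 𝕜] {K : 𝕜} {p : ℕ → 𝕜} {c : ℕ}

theorem IsInverseDegreeLaw.natCast_mul_apply (hp : IsInverseDegreeLaw K p) (hc : 1 ≤ c) :
    (c : 𝕜) * p c = K := by
  rw [hp c hc, mul_div_cancel₀ K (Nat.cast_ne_zero.mpr (Nat.one_le_iff_ne_zero.mp hc))]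

theorem IsInverseDegreeLaw.edgeRemovalTerm_eq_zero (hp : IsInverseDegreeLaw K p) (hc : 1 ≤ c) :
    edgeRemovalTerm p c = 0 := by
  rw [edgeRemovalTerm, ← Nat.cast_add_one, hp.natCast_mul_apply (Nat.le_add_left 1 c),
    hp.natCast_mul_apply hc, sub_self]

theorem IsInverseDegreeLaw.apply_pred_sub_apply (hp : IsInverseDegreeLaw K p) (hc : 2 ≤ c) :
    p (c - 1) - p c = K / ((c : 𝕜) * ((c : 𝕜) - 1)) := by
  have cast_ne_zero : (c : 𝕜) ≠ 0 := Nat.cast_ne_zero.mpr (by lia)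
  have cast_sub_one_ne_zero : (c : 𝕜) - 1 ≠ 0 :=
    sub_ne_zero.mpr (Nat.cast_ne_one.mpr (by lia))
  rw [hp (c - 1) (by lia), hp c (by lia), Nat.cast_pred (by lia)]
  field_simp
  ring

theorem IsInverseDegreeLaw.reattachmentTerm_eq (hp : IsInverseDegreeLaw K p) (hc : 2 ≤ c)
    (α : 𝕜) : reattachmentTerm α p c = α * (K / ((c : 𝕜) * ((c : 𝕜) - 1))) := by
  have pred_mul : ((c : 𝕜) - 1) * p (c - 1) = K := by
    rw [← Nat.cast_pred (by lia), hp.natCast_mul_apply (by lia)]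
  calc
    reattachmentTerm α p c
        = (((c : 𝕜) - 1) * p (c - 1) - (c : 𝕜) * p c) + α * (p (c - 1) - p c) := by
      rw [reattachmentTerm]; ring
    _ = α * (K / ((c : 𝕜) * ((c : 𝕜) - 1))) := by
      rw [pred_mul, hp.natCast_mul_apply (by lia), sub_self, zero_add,
        hp.apply_pred_sub_apply hc]

theorem IsInverseDegreeLaw.masterRHS_eq (hp : IsInverseDegreeLaw K p) (hc : 2 ≤ c)
    (E N D α : 𝕜) :
    masterRHS E N D α p c
      = 2 * D * K / ((c : 𝕜) * ((c : 𝕜) - 1)) * (α / (2 * E + N * α)) := by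
  rw [masterRHS, hp.edgeRemovalTerm_eq_zero (by lia), hp.reattachmentTerm_eq hc]
  ring

end Algebra

section Limit

variable {𝕜 : Type*} [Field 𝕜] [TopologicalSpace 𝕜] [IsTopologicalDivisionRing 𝕜]

theorem tendsto_div_add_mul_nhds_zero {b : 𝕜} (hb : b ≠ 0) (n : 𝕜) :
    Tendsto (fun α : 𝕜 => α / (b + n * α)) (𝓝 0) (𝓝 0) := by
  have continuousAt_zero : ContinuousAt (fun α : 𝕜 => α / (b + n * α)) 0 :=
    continuousAt_id.div (by fun_prop) (by simpa using hb)
  simpa using continuousAt_zero.tendsto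

theorem IsInverseDegreeLaw.tendsto_masterRHS [CharZero 𝕜] {K E : 𝕜} {p : ℕ → 𝕜} {c : ℕ}
    (hp : IsInverseDegreeLaw K p) (hc : 2 ≤ c) (hE : E ≠ 0) (N D : 𝕜) :
    Tendsto (fun α => masterRHS E N D α p c) (𝓝 0) (𝓝 0) := by
  simpa only [hp.masterRHS_eq hc, mul_zero] using
    (tendsto_div_add_mul_nhds_zero (mul_ne_zero two_ne_zero hE) N).const_mul
      (2 * D * K / ((c : 𝕜) * ((c : 𝕜) - 1)))

-- `S` is the set of attraction coefficients for which the master equation is posed.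
theorem power_law_stationary_vanishing_attraction_general [CharZero 𝕜] {E N D K : 𝕜}
    (hE : E ≠ 0) {p : ℕ → 𝕜} (hp : IsInverseDegreeLaw K p) {S : Set 𝕜}
    (hS : ∀ α ∈ S, 2 * E + N * α ≠ 0) {R : 𝕜 → ℕ → 𝕜}
    (hR : ∀ α ∈ S, ∀ c : ℕ, 2 ≤ c → R α c = masterRHS E N D α p c) (c : ℕ) (hc : 2 ≤ c) :
    edgeRemovalTerm p c = 0 ∧
      (∀ α ∈ S, R α c = 2 * D * K * α / ((2 * E + N * α) * (c : 𝕜) * ((c : 𝕜) - 1))) ∧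
      Tendsto (fun α => R α c) (𝓝[S] 0) (𝓝 0) := by
  refine ⟨hp.edgeRemovalTerm_eq_zero (by lia), fun α hα => ?_, ?_⟩
  · have totalAttraction_ne_zero : 2 * E + N * α ≠ 0 := hS α hα
    have cast_ne_zero : (c : 𝕜) ≠ 0 := Nat.cast_ne_zero.mpr (by lia)
    have cast_sub_one_ne_zero : (c : 𝕜) - 1 ≠ 0 :=
      sub_ne_zero.mpr (Nat.cast_ne_one.mpr (by lia))
    rw [hR α hα c hc, hp.masterRHS_eq hc, eq_div_iff
      (mul_ne_zero (mul_ne_zero totalAttraction_ne_zero cast_ne_zero) cast_sub_one_ne_zero)]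
    generalize 2 * E + N * α = totalAttraction at totalAttraction_ne_zero ⊢
    field_simp
  · have masterRHS_eventuallyEq : (fun α => masterRHS E N D α p c) =ᶠ[𝓝[S] 0] fun α => R α c :=
      eventually_nhdsWithin_of_forall fun α hα => (hR α hα c hc).symm
    exact ((hp.tendsto_masterRHS hc hE N D).mono_left nhdsWithin_le_nhds).congr'
      masterRHS_eventuallyEq

end Limit

/-- **The power law `p(c) = K/c` is stationary for the master equation in the limit of
vanishing attraction coefficient.** Let `E, N > 0`, `D > 0`, `K > 0` and let
`p(c) = K/c` for `c ≥ 1`. For `α > 0` let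
`R α c = (D/E)[(c+1)p(c+1) − c p(c)] + (2D/(2E+Nα))[(c−1+α)p(c−1) − (c+α)p(c)]`
be the right-hand side of the master equation evaluated at `p`. Then for every `c ≥ 2`:
the edge-removal term vanishes exactly, `(c+1)p(c+1) − c p(c) = 0`; the residual equals
`R α c = 2DKα/((2E+Nα) c (c−1))` for every `α > 0`; and `R α c → 0` as `α → 0⁺`. -/
theorem power_law_stationary_vanishing_attraction
    (E N D K : ℝ) (hE : 0 < E) (hN : 0 < N) (hD : 0 < D) (hK : 0 < K)
    (p : ℕ → ℝ) (hp : ∀ c : ℕ, 1 ≤ c → p c = K / (c : ℝ))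
    (R : ℝ → ℕ → ℝ)
    (hR : ∀ (α : ℝ), 0 < α → ∀ (c : ℕ), 2 ≤ c →
      R α c = D / E * (((c : ℝ) + 1) * p (c + 1) - (c : ℝ) * p c)
        + 2 * D / (2 * E + N * α)
            * (((c : ℝ) - 1 + α) * p (c - 1) - ((c : ℝ) + α) * p c)) :
    ∀ c : ℕ, 2 ≤ c →
      (((c : ℝ) + 1) * p (c + 1) - (c : ℝ) * p c = 0) ∧
      (∀ α : ℝ, 0 < α →
        R α c = 2 * D * K * α / ((2 * E + N * α) * (c : ℝ) * ((c : ℝ) - 1))) ∧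
      Filter.Tendsto (fun α => R α c) (nhdsWithin 0 (Set.Ioi 0)) (nhds 0) :=
  power_law_stationary_vanishing_attraction_general hE.ne' hp
    (fun α (hα : 0 < α) => by positivity) hR
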